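/- The map clean_SK is idempotent: for every relation r over R with surrogate key SK and potential key X ⊆ R \ {SK}, clean_SK(clean_SK(r, SK, X), SK, X) = clean_SK(r, SK, X), where the equivalence classes used in the outer application are computed in the relation clean_SK(r, SK, X). -/

import Mathlib

/-- Artificially unique duplicates: `t₁ ≡ t₂` iff `sim (t₁ A) (t₂ A)` for every `A ∈ X`. -/
def AUD {R D : Type*} (sim : D → D → Prop) (X : Set R) (t₁ t₂ : R → D) : Prop :=
  ∀ A ∈ X, sim (t₁ A) (t₂ A)

/-- The equivalence class `[t(SK)] = { t'(SK) : t' ∈ r, t ≡ t' }`. -/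
def eqClass {R D : Type*} (r : Set (R → D)) (sim : D → D → Prop) (X : Set R) (SK : R)
    (t : R → D) : Set D :=
  { v | ∃ t' ∈ r, AUD sim X t t' ∧ v = t' SK }

/-- `clean_SK(r, SK, X)`: tuples agreeing with some `t' ∈ r` on `R \ {SK}` and whose
`SK`-value is the minimum (the least element) of the equivalence class `[t'(SK)]`,
the class being computed in `r` itself. -/
def cleanSK {R D : Type*} [LinearOrder D] (r : Set (R → D)) (sim : D → D → Prop)
    (X : Set R) (SK : R) : Set (R → D) :=
  { t | ∃ t' ∈ r, (∀ A, A ≠ SK → t A = t' A) ∧ IsLeast (eqClass r sim X SK t') (t SK) }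

/-- `clean_SK` is idempotent:
`clean_SK(clean_SK(r, SK, X), SK, X) = clean_SK(r, SK, X)`, where the equivalence
classes used in the outer application are computed in `clean_SK(r, SK, X)`. -/
theorem cleanSK_idempotent {R D : Type*} [LinearOrder D]
    (r : Set (R → D)) (hfin : r.Finite)
    (sim : D → D → Prop) (hsim : Equivalence sim)
    (SK : R) (hSK : Set.InjOn (fun t => t SK) r)
    (X : Set R) (hX : SK ∉ X) :
    cleanSK (cleanSK r sim X SK) sim X SK = cleanSK r sim X SK := by
  have key : ∀ t ∈ cleanSK r sim X SK, ∀ s ∈ cleanSK r sim X SK, AUD sim X t s →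
      t SK = s SK := by
    rintro t ⟨t', ht', hta, htl⟩ s ⟨s', hs', hsa, hsl⟩ h
    have h' : AUD sim X t' s' := by
      intro A hA
      have hne : A ≠ SK := fun e => hX (e ▸ hA)
      rw [← hta A hne, ← hsa A hne]
      exact h A hA
    have he : eqClass r sim X SK t' = eqClass r sim X SK s' := by
      ext v
      constructor
      · rintro ⟨u, hu, hau, hv⟩
        exact ⟨u, hu, fun A hA => hsim.trans (hsim.symm (h' A hA)) (hau A hA), hv⟩
      · rintro ⟨u, hu, hau, hv⟩
        exact ⟨u, hu, fun A hA => hsim.trans (h' A hA) (hau A hA), hv⟩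
    rw [he] at htl
    exact htl.unique hsl
  ext t
  constructor
  · rintro ⟨t', ht', hta, ⟨s, hs, has, hv⟩, -⟩
    have e := key t' ht' s hs has
    have : t = t' := by
      funext A
      by_cases hA : A = SK
      · rw [hA, hv, e]
      · exact hta A hA
    rw [this]
    exact ht'
  · intro ht
    refine ⟨t, ht, fun _ _ => rfl, ⟨t, ht, fun A _ => hsim.refl _, rfl⟩, ?_⟩
    rintro v ⟨s, hs, has, rfl⟩
    exact (key t ht s hs has).le
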